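/- Let E′ ⊂ E ⊂ X be two sets that have finite perimeter in an open set W ⊂ X. Let ε ≥ 0 and let {w_i}_{i=1}^∞ be a sequence of locally Lipschitz functions on W such that w_i → χ_E in L^1_loc(W) and liminf_{i→∞} ∫_W g_{w_i} d𝔪 ≤ P(E,W) + ε. Then there exists a sequence {w_i′}_{i=1}^∞ of locally Lipschitz functions on W such that w_i′ ≤ w_i, w_i′ → χ_{E′} in L^1_loc(W), and liminf_{i→∞} ∫_W g_{w_i′} d𝔪 ≤ P(E′,W) + ε. -/

import Mathlib

open MeasureTheory Metric Filter Set ENNReal NNReal Topology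

/-- A curve: a rectifiable continuous map from a compact interval into `X`,
parametrized by arc length (hence `1`-Lipschitz on `[0, len]`). -/
structure Curve (X : Type*) [MetricSpace X] where
  len : ℝ
  len_nonneg : 0 ≤ len
  toFun : ℝ → X
  lipschitzOn : LipschitzOnWith 1 toFun (Set.Icc 0 len)

namespace Curve

variable {X : Type*} [MetricSpace X]

/-- A curve is nonconstant if it attains two distinct values. -/
def IsNonconstant (γ : Curve X) : Prop :=
  ∃ s ∈ Set.Icc (0:ℝ) γ.len, ∃ t ∈ Set.Icc (0:ℝ) γ.len, γ.toFun s ≠ γ.toFun t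

/-- A curve lies in a set `W`. -/
def IsIn (γ : Curve X) (W : Set X) : Prop :=
  ∀ s ∈ Set.Icc (0:ℝ) γ.len, γ.toFun s ∈ W

end Curve

variable {X : Type*} [MetricSpace X] [MeasurableSpace X] [BorelSpace X]

/-- The curve integral `∫_γ g ds` for an arc-length parametrized curve. -/
noncomputable def curveLintegral (g : X → ℝ≥0∞) (γ : Curve X) : ℝ≥0∞ :=
  ∫⁻ s in Set.Icc (0:ℝ) γ.len, g (γ.toFun s)

/-- The upper gradient inequality `|u(x) - u(y)| ≤ ∫_γ g ds` along a curve `γ`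
with endpoints `x, y`. -/
def UpperGradIneq (g : X → ℝ≥0∞) (u : X → ℝ) (γ : Curve X) : Prop :=
  ENNReal.ofReal |u (γ.toFun 0) - u (γ.toFun γ.len)| ≤ curveLintegral g γ

/-- The 1-modulus of a family of curves. -/
noncomputable def mod1 (μ : Measure X) (Γ : Set (Curve X)) : ℝ≥0∞ :=
  ⨅ (ρ : X → ℝ≥0∞) (_ : Measurable ρ ∧ ∀ γ ∈ Γ, 1 ≤ curveLintegral ρ γ),
    ∫⁻ x, ρ x ∂μ

/-- `g` is a 1-weak upper gradient of `u` in `W`: the upper gradient inequality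
holds for all nonconstant curves in `W` outside a family of 1-modulus zero. -/
def IsWeakUpperGradientOn (μ : Measure X) (g : X → ℝ≥0∞) (u : X → ℝ) (W : Set X) : Prop :=
  Measurable g ∧
    mod1 μ {γ : Curve X | γ.IsNonconstant ∧ γ.IsIn W ∧ ¬ UpperGradIneq g u γ} = 0

/-- `g` is a (strong) upper gradient of `u` in `X`. -/
def IsUpperGradient (g : X → ℝ≥0∞) (u : X → ℝ) : Prop :=
  Measurable g ∧ ∀ γ : Curve X, γ.IsNonconstant → UpperGradIneq g u γ

/-- `∫_W g_u dμ`: the integral over `W` of the minimal 1-weak upper gradient of `u`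
in `W`, equivalently the infimum of `∫_W g dμ` over all 1-weak upper gradients `g`
of `u` in `W`. -/
noncomputable def gradEnergy (μ : Measure X) (u : X → ℝ) (W : Set X) : ℝ≥0∞ :=
  ⨅ (g : X → ℝ≥0∞) (_ : IsWeakUpperGradientOn μ g u W), ∫⁻ x in W, g x ∂μ

/-- `u` is locally Lipschitz on `W`. -/
def LocLipschitzOn (u : X → ℝ) (W : Set X) : Prop :=
  ∀ x ∈ W, ∃ K : ℝ≥0, ∃ t ∈ nhdsWithin x W, LipschitzOnWith K u t

/-- Convergence `uᵢ → v` in `L¹_loc(W)`. -/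
def TendstoL1loc (μ : Measure X) (W : Set X) (u : ℕ → X → ℝ) (v : X → ℝ) : Prop :=
  ∀ W' : Set X, IsOpen W' → IsCompact (closure W') → closure W' ⊆ W →
    Tendsto (fun i => ∫⁻ x in W', ENNReal.ofReal |u i x - v x| ∂μ) atTop (𝓝 0)

/-- The total variation `‖Dv‖(W)` of a function `v` in an open set `W`. -/
noncomputable def variationOn (μ : Measure X) (v : X → ℝ) (W : Set X) : ℝ≥0∞ :=
  ⨅ (u : ℕ → X → ℝ) (_ : (∀ i, LocLipschitzOn (u i) W) ∧ TendstoL1loc μ W u v),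
    Filter.liminf (fun i => gradEnergy μ (u i) W) Filter.atTop

/-- The total variation `‖Dv‖(A)` of a function `v` in an arbitrary set `A`. -/
noncomputable def totalVar (μ : Measure X) (v : X → ℝ) (A : Set X) : ℝ≥0∞ :=
  ⨅ (W : Set X) (_ : IsOpen W ∧ A ⊆ W), variationOn μ v W

/-- The perimeter `P(E, A) = ‖Dχ_E‖(A)`. -/
noncomputable def perimeter (μ : Measure X) (E A : Set X) : ℝ≥0∞ :=
  totalVar μ (Set.indicator E fun _ => (1 : ℝ)) A

/-- The measure `μ` is doubling. -/
def IsDoublingMeasure (μ : Measure X) : Prop :=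
  ∃ C : ℝ≥0∞, 1 ≤ C ∧ ∀ (x : X) (r : ℝ), 0 < r → μ (ball x (2 * r)) ≤ C * μ (ball x r)

/-- The space supports a (1,1)-Poincaré inequality:
`⨍_{B(x,r)} |u - u_{B(x,r)}| dμ ≤ C r ⨍_{B(x,λr)} g dμ` for every ball, every
`u ∈ L¹_loc(X)` and every upper gradient `g` of `u` (stated here multiplied
through by the measures of the two balls). -/
def SupportsPoincare (μ : Measure X) : Prop :=
  ∃ C lam : ℝ, 0 < C ∧ 1 ≤ lam ∧
    ∀ (x : X) (r : ℝ), 0 < r → ∀ (u : X → ℝ) (g : X → ℝ≥0∞),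
      (∀ (y : X) (s : ℝ), IntegrableOn u (ball y s) μ) → IsUpperGradient g u →
        μ (ball x (lam * r)) *
            ∫⁻ y in ball x r, ENNReal.ofReal |u y - ⨍ z in ball x r, u z ∂μ| ∂μ ≤
          ENNReal.ofReal (C * r) * μ (ball x r) * ∫⁻ y in ball x (lam * r), g y ∂μ

/-- `(X, d, μ)` is a PI space: complete, doubling, supporting a (1,1)-Poincaré
inequality. -/
def IsPISpace (μ : Measure X) : Prop :=
  CompleteSpace X ∧ IsDoublingMeasure μ ∧ SupportsPoincare μ

/-- A set `E` of finite perimeter is decomposable in a Borel set `D` if there is a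
partition `{F, G}` of `E ∩ D` into sets of finite perimeter in `D`, both of positive
measure, with `P(E,D) = P(F,D) + P(G,D)`. -/
def IsDecomposableIn (μ : Measure X) (E D : Set X) : Prop :=
  ∃ F G : Set X, MeasurableSet F ∧ MeasurableSet G ∧ Disjoint F G ∧ F ∪ G = E ∩ D ∧
    perimeter μ F D < ⊤ ∧ perimeter μ G D < ⊤ ∧ 0 < μ F ∧ 0 < μ G ∧
    perimeter μ E D = perimeter μ F D + perimeter μ G D

/-- `E` is indecomposable in `D`. -/
def IsIndecomposableIn (μ : Measure X) (E D : Set X) : Prop :=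
  ¬ IsDecomposableIn μ E D

/-- `{F i}_{i ∈ I}` is a (finite or countable) partition of `E` into indecomposable
Borel sets of positive measure and finite perimeter whose perimeters sum to `P(E,X)`;
this is the defining property of the essential connected components `𝒞𝒞ᵉ(E)`. -/
def IsEssentialPartition (μ : Measure X) (E : Set X) (I : Set ℕ) (F : ℕ → Set X) : Prop :=
  (∀ i ∈ I, MeasurableSet (F i)) ∧
  (∀ i ∈ I, ∀ j ∈ I, i ≠ j → Disjoint (F i) (F j)) ∧
  (⋃ i ∈ I, F i) = E ∧
  (∀ i ∈ I, 0 < μ (F i)) ∧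
  (∀ i ∈ I, perimeter μ (F i) Set.univ < ⊤) ∧
  (∀ i ∈ I, IsIndecomposableIn μ (F i) Set.univ) ∧
  perimeter μ E Set.univ = ∑' i : I, perimeter μ (F i.1) Set.univ

/-- Given a decomposition `{G i}_{i ∈ I}` of `X ∖ E` into essential connected
components, the saturation of `E`: the union of `E` and its holes, i.e. the
components of finite measure. -/
def saturationOf (μ : Measure X) (E : Set X) (I : Set ℕ) (G : ℕ → Set X) : Set X :=
  E ∪ ⋃ (i : ℕ) (_ : i ∈ I ∧ μ (G i) < ⊤), G i

/-- The measure-theoretic boundary `∂* E`: points where both `E` and its complement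
have strictly positive upper density. -/
def mtBoundary (μ : Measure X) (E : Set X) : Set X :=
  {x : X |
    0 < Filter.limsup (fun r => μ (ball x r ∩ E) / μ (ball x r)) (nhdsWithin 0 (Set.Ioi 0)) ∧
    0 < Filter.limsup (fun r => μ (ball x r \ E) / μ (ball x r)) (nhdsWithin 0 (Set.Ioi 0))}

/-- The restricted codimension-one Hausdorff content `ℋ_R`. -/
noncomputable def codimOneContent (μ : Measure X) (R : ℝ) (A : Set X) : ℝ≥0∞ :=
  ⨅ (s : Set (X × ℝ))
    (_ : s.Countable ∧ (∀ p ∈ s, 0 < p.2 ∧ p.2 ≤ R) ∧ A ⊆ ⋃ p ∈ s, ball p.1 p.2),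
    ∑' p : s, μ (ball (p : X × ℝ).1 (p : X × ℝ).2) / ENNReal.ofReal (p : X × ℝ).2

/-- The codimension-one Hausdorff measure `ℋ(A) = lim_{R → 0} ℋ_R(A)`. -/
noncomputable def codimOneHausdorff (μ : Measure X) (A : Set X) : ℝ≥0∞ :=
  ⨆ (R : ℝ) (_ : 0 < R), codimOneContent μ R A

namespace Curve

/-- The restriction of a curve to `[s, t]`, reparametrized to start at `0`. -/
def subcurve (γ : Curve X) (s t : ℝ) (hs : 0 ≤ s) (hst : s ≤ t) (ht : t ≤ γ.len) : Curve X where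
  len := t - s
  len_nonneg := sub_nonneg.2 hst
  toFun r := γ.toFun (r + s)
  lipschitzOn := by
    intro x hx y hy
    have := γ.lipschitzOn (x := x + s) ⟨by linarith [hx.1], by linarith [hx.2]⟩
      (y := y + s) ⟨by linarith [hy.1], by linarith [hy.2]⟩
    simpa using this

end Curve

theorem curveLintegral_subcurve (g : X → ℝ≥0∞) (γ : Curve X) {s t : ℝ} (hs : 0 ≤ s) (hst : s ≤ t)
    (ht : t ≤ γ.len) :
    curveLintegral g (γ.subcurve s t hs hst ht) = ∫⁻ r in Icc s t, g (γ.toFun r) := by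
  have h := (measurePreserving_add_right (volume : Measure ℝ) s).setLIntegral_comp_preimage_emb
    (measurableEmbedding_addRight s) (fun r => g (γ.toFun r)) (Icc s t)
  rw [Set.preimage_add_const_Icc, sub_self] at h
  exact h

theorem mod1_le_of_forall_exists (μ : Measure X) {Γ Γ' : Set (Curve X)}
    (h : ∀ γ ∈ Γ', ∃ γ' ∈ Γ, ∀ ρ : X → ℝ≥0∞, curveLintegral ρ γ' ≤ curveLintegral ρ γ) :
    mod1 μ Γ' ≤ mod1 μ Γ := by
  refine le_iInf₂ fun ρ hρ => iInf₂_le ρ ⟨hρ.1, fun γ hγ => ?_⟩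
  obtain ⟨γ', hγ', hle⟩ := h γ hγ
  exact (hρ.2 γ' hγ').trans (hle ρ)

theorem mod1_mono (μ : Measure X) {Γ Γ' : Set (Curve X)} (h : Γ' ⊆ Γ) : mod1 μ Γ' ≤ mod1 μ Γ :=
  mod1_le_of_forall_exists μ fun γ hγ => ⟨γ, h hγ, fun _ => le_rfl⟩

theorem mod1_union_le (μ : Measure X) (Γ Γ' : Set (Curve X)) :
    mod1 μ (Γ ∪ Γ') ≤ mod1 μ Γ + mod1 μ Γ' := by
  unfold mod1
  refine ENNReal.le_iInf₂_add_iInf₂ fun ρ hρ ρ' hρ' => ?_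
  rw [← lintegral_add_left hρ.1]
  refine iInf₂_le (fun x => ρ x + ρ' x) ⟨hρ.1.add hρ'.1, ?_⟩
  rintro γ (hγ | hγ)
  · exact (hρ.2 γ hγ).trans (lintegral_mono fun _ => le_self_add)
  · exact (hρ'.2 γ hγ).trans (lintegral_mono fun _ => le_add_self)

theorem ofReal_abs_sub_le_lintegral_of_open_cover {ι : Type*} {m : ℝ → ℝ} {L : ℝ} (hL : 0 ≤ L)
    {K : ℝ≥0} (hm : LipschitzOnWith K m (Icc 0 L)) (G : ℝ → ℝ≥0∞) (c : ι → Set (Icc (0 : ℝ) L))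
    (hc : ∀ i, IsOpen (c i))
    (hcG : ∀ i, ∀ s t : Icc (0 : ℝ) L, s ≤ t → Icc s t ⊆ c i →
      ENNReal.ofReal |m t - m s| ≤ ∫⁻ r in Icc (s : ℝ) t, G r)
    (htop : ∀ r : Icc (0 : ℝ) L, (∀ i, r ∉ c i) → G r = ⊤) :
    ENNReal.ofReal |m L - m 0| ≤ ∫⁻ r in Icc (0 : ℝ) L, G r := by
  set C : Set ℝ := Subtype.val '' (⋃ i, c i)ᶜ with hC
  have hCcomp : IsCompact C :=
    ((isOpen_iUnion hc).isClosed_compl.isCompact).image continuous_subtype_val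
  have hCsub : C ⊆ Icc 0 L := by
    rintro _ ⟨x, -, rfl⟩
    exact x.2
  have hCtop : ∀ r ∈ C, G r = ⊤ := by
    rintro _ ⟨x, hx, rfl⟩
    exact htop x (by simpa using hx)
  by_cases hvol : volume C = 0
  swap
  · have : (⊤ : ℝ≥0∞) ≤ ∫⁻ r in Icc (0 : ℝ) L, G r := by
      calc (⊤ : ℝ≥0∞) = ∫⁻ _ in C, ⊤ := by simp [hvol]
        _ = ∫⁻ r in C, G r :=
          setLIntegral_congr_fun hCcomp.measurableSet fun r hr => (hCtop r hr).symm
        _ ≤ _ := lintegral_mono_set hCsub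
    exact le_top.trans this
  refine ENNReal.le_of_forall_pos_le_add fun η hη _ => ?_
  have hpos : volume C < (η : ℝ≥0∞) / K := by
    rw [hvol]
    exact ENNReal.div_pos (by exact_mod_cast hη.ne') ENNReal.coe_ne_top
  obtain ⟨O, hCO, hO, hOlt⟩ := C.exists_isOpen_lt_of_lt _ hpos
  set F : ℝ → ℝ≥0∞ := fun r => G r + O.indicator (fun _ => (K : ℝ≥0∞)) r with hF
  have hFint : ∫⁻ r in Icc (0 : ℝ) L, F r ≤ (∫⁻ r in Icc (0 : ℝ) L, G r) + η := by
    rw [hF, lintegral_add_right _ (measurable_const.indicator hO.measurableSet)]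
    gcongr
    calc ∫⁻ r in Icc (0 : ℝ) L, O.indicator (fun _ => (K : ℝ≥0∞)) r
        ≤ ∫⁻ r, O.indicator (fun _ => (K : ℝ≥0∞)) r := setLIntegral_le_lintegral _ _
      _ = K * volume O := by rw [lintegral_indicator_const hO.measurableSet]
      _ ≤ K * (η / K) := by gcongr
      _ ≤ η := ENNReal.mul_div_le
  refine le_trans ?_ hFint
  obtain ⟨t, ht0, htm, ⟨N, hN⟩, htc⟩ := exists_monotone_Icc_subset_open_cover_Icc hL
    (c := fun i : Option ι => i.elim (Subtype.val ⁻¹' O) c)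
    (by rintro (_ | i)
        · exact hO.preimage continuous_subtype_val
        · exact hc i)
    (by intro x _
        by_cases hx : ∃ i, x ∈ c i
        · obtain ⟨i, hi⟩ := hx
          exact mem_iUnion.2 ⟨some i, hi⟩
        · exact mem_iUnion.2 ⟨none, hCO ⟨x, by simpa using hx, rfl⟩⟩)
  have hstep : ∀ n, ENNReal.ofReal |m (t (n + 1)) - m (t n)| ≤
      ∫⁻ r in Ioc (t n : ℝ) (t (n + 1)), F r := by
    intro n
    have hle : t n ≤ t (n + 1) := htm n.le_succ
    rw [restrict_Ioc_eq_restrict_Icc]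
    obtain ⟨_ | i, hi⟩ := htc n
    · have h1 : ENNReal.ofReal |m (t (n + 1)) - m (t n)| ≤
          ∫⁻ _ in Icc (t n : ℝ) (t (n + 1)), (K : ℝ≥0∞) := by
        have := hm.dist_le_mul _ (t (n + 1)).2 _ (t n).2
        rw [Real.dist_eq, Real.dist_eq, abs_of_nonneg (a := (t (n + 1) : ℝ) - t n)
          (sub_nonneg.2 (by exact_mod_cast hle))] at this
        refine (ENNReal.ofReal_le_ofReal this).trans ?_
        rw [ENNReal.ofReal_mul K.coe_nonneg]
        simp
      refine h1.trans (setLIntegral_mono' measurableSet_Icc fun r hr => ?_)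
      have hrO : r ∈ O :=
        hi (show (⟨r, (t n).2.1.trans hr.1, hr.2.trans (t (n + 1)).2.2⟩ : Icc (0 : ℝ) L) ∈
          Icc (t n) (t (n + 1)) from ⟨hr.1, hr.2⟩)
      simp [hF, hrO]
    · exact (hcG i _ _ hle hi).trans (lintegral_mono fun _ => le_self_add)
  have hsum : ∀ n, ENNReal.ofReal |m (t n) - m (t 0)| ≤ ∫⁻ r in Ioc (t 0 : ℝ) (t n), F r := by
    intro n
    induction n with
    | zero => simp
    | succ n ih =>
      rw [← Ioc_union_Ioc_eq_Ioc (b := (t n : ℝ)) (by exact_mod_cast htm n.zero_le)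
        (by exact_mod_cast htm n.le_succ),
        lintegral_union measurableSet_Ioc (Ioc_disjoint_Ioc_of_le le_rfl)]
      refine le_trans ?_ (add_le_add ih (hstep n))
      rw [← ENNReal.ofReal_add (abs_nonneg _) (abs_nonneg _),
        add_comm |m (t n) - m (t 0)|]
      exact ENNReal.ofReal_le_ofReal (abs_sub_le _ _ _)
  have := hsum N
  rw [hN N le_rfl, ht0, restrict_Ioc_eq_restrict_Icc] at this
  exact this

theorem Curve.lipschitzOnWith_comp {m : X → ℝ} {W : Set X} (hm : LocLipschitzOn m W) (γ : Curve X)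
    (hγ : γ.IsIn W) : ∃ K, LipschitzOnWith K (fun r => m (γ.toFun r)) (Icc 0 γ.len) := by
  refine LocallyLipschitzOn.exists_lipschitzOnWith_of_compact isCompact_Icc fun x hx => ?_
  obtain ⟨K, t, ht, hK⟩ := hm _ (hγ x hx)
  have htend : Tendsto γ.toFun (𝓝[Icc 0 γ.len] x) (𝓝[W] (γ.toFun x)) :=
    (γ.lipschitzOn.continuousOn x hx).tendsto_nhdsWithin hγ
  exact ⟨K * 1, γ.toFun ⁻¹' t ∩ Icc 0 γ.len, inter_mem (htend ht) self_mem_nhdsWithin,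
    hK.comp (γ.lipschitzOn.mono inter_subset_right) fun _ hr => hr.1⟩

theorem upperGradIneq_of_not_exists_subcurve {g : X → ℝ≥0∞} {u : X → ℝ} {W : Set X} {γ : Curve X}
    (hγ : γ.IsIn W)
    (h : ¬ ∃ s t, ∃ (hs : 0 ≤ s) (hst : s ≤ t) (ht : t ≤ γ.len),
      (γ.subcurve s t hs hst ht).IsNonconstant ∧ (γ.subcurve s t hs hst ht).IsIn W ∧
        ¬ UpperGradIneq g u (γ.subcurve s t hs hst ht))
    {s t : ℝ} (hs : 0 ≤ s) (hst : s ≤ t) (ht : t ≤ γ.len) :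
    ENNReal.ofReal |u (γ.toFun t) - u (γ.toFun s)| ≤ ∫⁻ r in Icc s t, g (γ.toFun r) := by
  by_cases hne : γ.toFun s = γ.toFun t
  · simp [hne]
  by_contra hlt
  refine h ⟨s, t, hs, hst, ht, ⟨0, ⟨le_rfl, sub_nonneg.2 hst⟩, t - s, ⟨sub_nonneg.2 hst, le_rfl⟩,
    by simpa [Curve.subcurve] using hne⟩, fun r hr => hγ _ ⟨?_, ?_⟩, ?_⟩
  · linarith [hr.1]
  · have : r ≤ t - s := hr.2
    linarith
  · rw [UpperGradIneq, curveLintegral_subcurve, abs_sub_comm]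
    simpa [Curve.subcurve] using hlt

theorem mod1_exists_subcurve_le (μ : Measure X) (Γ : Set (Curve X)) :
    mod1 μ {γ : Curve X | ∃ s t, ∃ (hs : 0 ≤ s) (hst : s ≤ t) (ht : t ≤ γ.len),
      γ.subcurve s t hs hst ht ∈ Γ} ≤ mod1 μ Γ := by
  refine mod1_le_of_forall_exists μ ?_
  rintro γ ⟨s, t, hs, hst, ht, hΓ⟩
  refine ⟨_, hΓ, fun ρ => ?_⟩
  rw [curveLintegral_subcurve]
  exact lintegral_mono_set (Icc_subset_Icc hs ht)

open Classical in
theorem IsWeakUpperGradientOn.piecewise {μ : Measure X} {W U V : Set X} (hU : IsOpen U)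
    (hV : IsOpen V) (hUV : Disjoint U V) {u v m : X → ℝ} {g h : X → ℝ≥0∞}
    (hg : IsWeakUpperGradientOn μ g u W) (hh : IsWeakUpperGradientOn μ h v W)
    (hm : LocLipschitzOn m W) (hmu : EqOn m u U) (hmv : EqOn m v V) :
    IsWeakUpperGradientOn μ (U.piecewise g (V.piecewise h fun _ => ⊤)) m W := by
  refine ⟨hg.1.piecewise hU.measurableSet (hh.1.piecewise hV.measurableSet measurable_const), ?_⟩
  rw [← nonpos_iff_eq_zero]
  refine le_trans ?_ (add_le_add ((mod1_exists_subcurve_le μ _).trans_eq hg.2)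
    ((mod1_exists_subcurve_le μ _).trans_eq hh.2) |>.trans_eq (add_zero 0))
  refine le_trans (mod1_mono μ ?_) (mod1_union_le μ _ _)
  rintro γ ⟨-, hγW, hγ⟩
  by_contra hnot
  rw [mem_union, not_or] at hnot
  have hu := fun {s t : ℝ} => upperGradIneq_of_not_exists_subcurve (s := s) (t := t) hγW hnot.1
  have hv := fun {s t : ℝ} => upperGradIneq_of_not_exists_subcurve (s := s) (t := t) hγW hnot.2
  apply hγ
  obtain ⟨K, hK⟩ := γ.lipschitzOnWith_comp hm hγW
  have hcont : Continuous fun r : Icc (0 : ℝ) γ.len => γ.toFun r :=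
    γ.lipschitzOn.continuousOn.domRestrict
  rw [UpperGradIneq, abs_sub_comm]
  refine ofReal_abs_sub_le_lintegral_of_open_cover γ.len_nonneg hK
    (fun r => U.piecewise g (V.piecewise h fun _ => ⊤) (γ.toFun r))
    (fun b : Bool => (fun r : Icc (0 : ℝ) γ.len => γ.toFun r) ⁻¹' (if b then U else V)) ?_ ?_ ?_
  · rintro (_ | _)
    · exact hV.preimage hcont
    · exact hU.preimage hcont
  · have hmem {s t : Icc (0 : ℝ) γ.len} {S : Set X}
        (hsub : Icc s t ⊆ (fun r : Icc (0 : ℝ) γ.len => γ.toFun r) ⁻¹' S) :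
        ∀ r ∈ Icc (s : ℝ) t, γ.toFun r ∈ S := fun r hr =>
      hsub (show (⟨r, s.2.1.trans hr.1, hr.2.trans t.2.2⟩ : Icc (0 : ℝ) γ.len) ∈ Icc s t
        from ⟨hr.1, hr.2⟩)
    rintro (_ | _) s t hst hsub
    · have hS := hmem (S := V) hsub
      rw [hmv (hS t ⟨hst, le_rfl⟩), hmv (hS s ⟨le_rfl, hst⟩)]
      refine (hv s.2.1 hst t.2.2).trans_eq (setLIntegral_congr_fun measurableSet_Icc fun r hr => ?_)
      simp [hUV.notMem_of_mem_right (hS r hr), hS r hr]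
    · have hS := hmem (S := U) hsub
      rw [hmu (hS t ⟨hst, le_rfl⟩), hmu (hS s ⟨le_rfl, hst⟩)]
      refine (hu s.2.1 hst t.2.2).trans_eq (setLIntegral_congr_fun measurableSet_Icc fun r hr => ?_)
      simp [hS r hr]
  · intro r hr
    have h1 : γ.toFun r ∉ U := by simpa using hr true
    have h2 : γ.toFun r ∉ V := by simpa using hr false
    simp [h1, h2]

theorem LocLipschitzOn.continuousOn {u : X → ℝ} {W : Set X} (hu : LocLipschitzOn u W) :
    ContinuousOn u W :=
  LocallyLipschitzOn.continuousOn hu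

theorem LocLipschitzOn.min {u v : X → ℝ} {W : Set X} (hu : LocLipschitzOn u W)
    (hv : LocLipschitzOn v W) : LocLipschitzOn (fun x => min (u x) (v x)) W := by
  intro x hx
  obtain ⟨K, s, hs, hK⟩ := hu x hx
  obtain ⟨L, t, ht, hL⟩ := hv x hx
  refine ⟨Max.max K L, s ∩ t, inter_mem hs ht, ?_⟩
  exact lipschitzOnWith_iff_restrict.2
    ((lipschitzOnWith_iff_restrict.1 (hK.mono inter_subset_left)).min
      (lipschitzOnWith_iff_restrict.1 (hL.mono inter_subset_right)))

theorem LocLipschitzOn.max {u v : X → ℝ} {W : Set X} (hu : LocLipschitzOn u W)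
    (hv : LocLipschitzOn v W) : LocLipschitzOn (fun x => max (u x) (v x)) W := by
  intro x hx
  obtain ⟨K, s, hs, hK⟩ := hu x hx
  obtain ⟨L, t, ht, hL⟩ := hv x hx
  refine ⟨Max.max K L, s ∩ t, inter_mem hs ht, ?_⟩
  exact lipschitzOnWith_iff_restrict.2
    ((lipschitzOnWith_iff_restrict.1 (hK.mono inter_subset_left)).max
      (lipschitzOnWith_iff_restrict.1 (hL.mono inter_subset_right)))

theorem LocLipschitzOn.sub_const {u : X → ℝ} {W : Set X} (hu : LocLipschitzOn u W) (c : ℝ) :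
    LocLipschitzOn (fun x => u x - c) W := by
  intro x hx
  obtain ⟨K, s, hs, hK⟩ := hu x hx
  exact ⟨K, s, hs, fun y hy z hz => by simpa using hK hy hz⟩

theorem LocLipschitzOn.mono {u : X → ℝ} {W W' : Set X} (hu : LocLipschitzOn u W') (h : W ⊆ W') :
    LocLipschitzOn u W :=
  LocallyLipschitzOn.mono hu h

theorem gradEnergy_le {μ : Measure X} {g : X → ℝ≥0∞} {u : X → ℝ} {W : Set X}
    (hg : IsWeakUpperGradientOn μ g u W) : gradEnergy μ u W ≤ ∫⁻ x in W, g x ∂μ :=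
  iInf₂_le g hg

theorem gradEnergy_min_add_gradEnergy_max_le {μ : Measure X} {W : Set X} (hW : IsOpen W)
    {u v : X → ℝ} (hu : LocLipschitzOn u W) (hv : LocLipschitzOn v W)
    (h0 : μ {x ∈ W | u x = v x} = 0) :
    gradEnergy μ (fun x => min (u x) (v x)) W + gradEnergy μ (fun x => max (u x) (v x)) W ≤
      gradEnergy μ u W + gradEnergy μ v W := by
  classical
  set U : Set X := {x ∈ W | u x < v x} with hUdef
  set V : Set X := {x ∈ W | v x < u x} with hVdef
  have hopen {a b : X → ℝ} (ha : ContinuousOn a W) (hb : ContinuousOn b W) :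
      IsOpen {x ∈ W | a x < b x} := by
    have := (hb.sub ha).isOpen_inter_preimage hW isOpen_Ioi (t := Ioi (0 : ℝ))
    convert this using 1
    ext x
    simp
  have hU : IsOpen U := hopen hu.continuousOn hv.continuousOn
  have hV : IsOpen V := hopen hv.continuousOn hu.continuousOn
  have hUV : Disjoint U V := by
    rw [Set.disjoint_left]
    exact fun x hx hx' => lt_asymm hx.2 hx'.2
  have hWUV : (W : Set X) =ᵐ[μ] (U ∪ V : Set X) := by
    refine (ae_eq_set.2 ⟨measure_mono_null ?_ h0, ?_⟩)
    · rintro x ⟨hx, hx'⟩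
      refine ⟨hx, le_antisymm ?_ ?_⟩ <;> by_contra! hlt
      · exact hx' (Or.inr ⟨hx, hlt⟩)
      · exact hx' (Or.inl ⟨hx, hlt⟩)
    · rw [sdiff_eq_empty.2 (union_subset (sep_subset _ _) (sep_subset _ _)), measure_empty]
  have hint (f : X → ℝ≥0∞) : ∫⁻ x in W, f x ∂μ = ∫⁻ x in U, f x ∂μ + ∫⁻ x in V, f x ∂μ := by
    rw [setLIntegral_congr hWUV, lintegral_union hV.measurableSet hUV]
  have hpw (g h : X → ℝ≥0∞) {A B : Set X} (hA : IsOpen A) (hB : IsOpen B) (hAB : Disjoint A B) :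
      ∫⁻ x in A, A.piecewise g (B.piecewise h fun _ => ⊤) x ∂μ = ∫⁻ x in A, g x ∂μ ∧
      ∫⁻ x in B, A.piecewise g (B.piecewise h fun _ => ⊤) x ∂μ = ∫⁻ x in B, h x ∂μ := by
    refine ⟨setLIntegral_congr_fun hA.measurableSet fun x hx => ?_,
      setLIntegral_congr_fun hB.measurableSet fun x hx => ?_⟩
    · simp [hx]
    · simp [hx, hAB.notMem_of_mem_right hx]
  conv_rhs => unfold gradEnergy
  refine ENNReal.le_iInf₂_add_iInf₂ fun g hg h hh => ?_
  have hmin := hg.piecewise hU hV hUV hh (hu.min hv)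
    (fun x hx => min_eq_left hx.2.le) (fun x hx => min_eq_right hx.2.le)
  have hmax := hg.piecewise hV hU hUV.symm hh (hu.max hv)
    (fun x hx => max_eq_left hx.2.le) (fun x hx => max_eq_right hx.2.le)
  refine (add_le_add (gradEnergy_le hmin) (gradEnergy_le hmax)).trans_eq ?_
  simp only [hint]
  rw [(hpw g h hU hV hUV).1, (hpw g h hU hV hUV).2, (hpw g h hV hU hUV.symm).1,
    (hpw g h hV hU hUV.symm).2]
  ring

theorem gradEnergy_mono {μ : Measure X} {u : X → ℝ} {W W' : Set X} (h : W ⊆ W') :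
    gradEnergy μ u W ≤ gradEnergy μ u W' := by
  refine le_iInf₂ fun g hg => (gradEnergy_le ⟨hg.1, ?_⟩).trans (lintegral_mono_set h)
  rw [← nonpos_iff_eq_zero, ← hg.2]
  exact mod1_mono μ fun γ hγ => ⟨hγ.1, fun s hs => h (hγ.2.1 s hs), hγ.2.2⟩

theorem gradEnergy_sub_const_le (μ : Measure X) (u : X → ℝ) (W : Set X) (c : ℝ) :
    gradEnergy μ (fun x => u x - c) W ≤ gradEnergy μ u W := by
  refine le_iInf₂ fun g hg => gradEnergy_le ⟨hg.1, ?_⟩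
  rw [← nonpos_iff_eq_zero, ← hg.2]
  refine mod1_mono μ fun γ hγ => ⟨hγ.1, hγ.2.1, fun h => hγ.2.2 ?_⟩
  simpa [UpperGradIneq] using h

theorem variationOn_mono {μ : Measure X} {v : X → ℝ} {W W' : Set X} (h : W ⊆ W') :
    variationOn μ v W ≤ variationOn μ v W' := by
  refine le_iInf₂ fun u hu => (iInf₂_le u ⟨fun i => (hu.1 i).mono h, ?_⟩).trans
    (liminf_le_liminf (Eventually.of_forall fun i => gradEnergy_mono h))
  exact fun V hV hVc hVW => hu.2 V hV hVc (hVW.trans h)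

theorem perimeter_eq_variationOn {μ : Measure X} {E W : Set X} (hW : IsOpen W) :
    perimeter μ E W = variationOn μ (E.indicator fun _ => (1 : ℝ)) W :=
  le_antisymm (iInf₂_le W ⟨hW, Subset.rfl⟩) (le_iInf₂ fun _ hV => variationOn_mono hV.2)

/-- An open subset of a proper space is exhausted by relatively compact open subsets. -/
theorem IsOpen.exists_relCompact_exhaustion {X : Type*} [MetricSpace X] [ProperSpace X] {W : Set X}
    (hW : IsOpen W) : ∃ V : ℕ → Set X, (∀ n, IsOpen (V n)) ∧ (∀ n, IsCompact (closure (V n))) ∧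
      (∀ n, closure (V n) ⊆ W) ∧ ∀ K, IsCompact K → K ⊆ W → ∀ᶠ n in atTop, K ⊆ V n := by
  rcases isEmpty_or_nonempty X with hX | ⟨⟨x₀⟩⟩
  · exact ⟨fun _ => ∅, by simp, by simp, by simp, fun K _ _ => by simp [Set.eq_empty_of_isEmpty K]⟩
  set V : ℕ → Set X := fun n => ball x₀ n ∩ {x | ((n : ℝ≥0∞) + 1)⁻¹ < infEDist x Wᶜ} with hV
  have hVo n : IsOpen (V n) := isOpen_ball.inter (isOpen_lt continuous_const continuous_infEDist)
  have hVcl n : closure (V n) ⊆ closedBall x₀ n ∩ {x | ((n : ℝ≥0∞) + 1)⁻¹ ≤ infEDist x Wᶜ} :=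
    closure_minimal (inter_subset_inter ball_subset_closedBall fun x hx =>
      show ((n : ℝ≥0∞) + 1)⁻¹ ≤ infEDist x Wᶜ from le_of_lt hx)
      (isClosed_closedBall.inter (isClosed_le continuous_const continuous_infEDist))
  have hmono : Monotone V := by
    intro m n hmn x hx
    refine ⟨ball_subset_ball (by exact_mod_cast hmn) hx.1,
      show ((n : ℝ≥0∞) + 1)⁻¹ < infEDist x Wᶜ from lt_of_le_of_lt ?_ hx.2⟩
    gcongr
  refine ⟨V, hVo, fun n => (isCompact_closedBall x₀ n).of_isClosed_subset isClosed_closure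
    ((hVcl n).trans inter_subset_left), fun n x hx => ?_, fun K hK hKW => ?_⟩
  · by_contra hxW
    have h1 : ((n : ℝ≥0∞) + 1)⁻¹ ≤ infEDist x Wᶜ := (hVcl n hx).2
    rw [infEDist_zero_of_mem (show x ∈ Wᶜ from hxW), nonpos_iff_eq_zero] at h1
    simp at h1
  · have hcov : K ⊆ ⋃ n, V n := by
      intro x hx
      have hpos : infEDist x Wᶜ ≠ 0 := fun h0 =>
        (mem_iff_infEDist_zero_of_closed hW.isClosed_compl).2 h0 (hKW hx)
      obtain ⟨m, hm⟩ := ENNReal.exists_inv_nat_lt hpos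
      obtain ⟨k, hk⟩ := exists_nat_gt (dist x x₀)
      refine mem_iUnion.2 ⟨Max.max m k, ?_, ?_⟩
      · exact mem_ball.2 (hk.trans_le (by exact_mod_cast le_max_right m k))
      · refine lt_of_le_of_lt (ENNReal.inv_le_inv.2 ?_) hm
        exact_mod_cast (le_max_left m k).trans (Nat.le_succ _)
    obtain ⟨n, hn⟩ := hK.elim_directed_cover V hVo hcov hmono.directed_le
    exact (eventually_ge_atTop n).mono fun m hm => hn.trans (hmono hm)

theorem exists_seq_gradEnergy_le [ProperSpace X] {μ : Measure X} {v : X → ℝ} {W : Set X}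
    (hW : IsOpen W) (hv : variationOn μ v W < ⊤) :
    ∃ u : ℕ → X → ℝ, (∀ i, LocLipschitzOn (u i) W) ∧ TendstoL1loc μ W u v ∧
      ∀ i, gradEnergy μ (u i) W ≤ variationOn μ v W + ((i : ℝ≥0∞) + 1)⁻¹ := by
  obtain ⟨V, hVo, hVc, hVW, hV⟩ := hW.exists_relCompact_exhaustion
  have hex : ∀ n : ℕ, ∃ f : X → ℝ, LocLipschitzOn f W ∧
      ∫⁻ x in V n, ENNReal.ofReal |f x - v x| ∂μ ≤ ((n : ℝ≥0∞) + 1)⁻¹ ∧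
      gradEnergy μ f W ≤ variationOn μ v W + ((n : ℝ≥0∞) + 1)⁻¹ := by
    intro n
    have hpos : 0 < ((n : ℝ≥0∞) + 1)⁻¹ := by simp
    obtain ⟨u, hu⟩ := iInf_lt_iff.1 (ENNReal.lt_add_right hv.ne hpos.ne')
    obtain ⟨hu, hlt⟩ := iInf_lt_iff.1 hu
    obtain ⟨i, hi, hi'⟩ := ((frequently_lt_of_liminf_lt (by isBoundedDefault) hlt).and_eventually
      ((hu.2 (V n) (hVo n) (hVc n) (hVW n)).eventually_lt_const hpos)).exists
    exact ⟨u i, hu.1 i, hi'.le, hi.le⟩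
  choose u hu hL1 hen using hex
  refine ⟨u, hu, fun W' _ hW'c hW'W => ?_, hen⟩
  have hlim : Tendsto (fun n : ℕ => ((n : ℝ≥0∞) + 1)⁻¹) atTop (𝓝 0) := by
    simpa using (tendsto_add_atTop_iff_nat 1).2 ENNReal.tendsto_inv_nat_nhds_zero
  refine tendsto_of_tendsto_of_tendsto_of_le_of_le' tendsto_const_nhds hlim
    (Eventually.of_forall fun _ => zero_le) ?_
  filter_upwards [hV _ hW'c hW'W] with n hn
  exact (lintegral_mono_set (subset_closure.trans hn)).trans (hL1 n)

theorem exists_shift_measure_eq_zero {μ : Measure X} [SFinite μ] {W : Set X} (hW : MeasurableSet W)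
    {u v : X → ℝ} (hu : ContinuousOn u W) (hv : ContinuousOn v W) {δ : ℝ} (hδ : 0 < δ) :
    ∃ c ∈ Ioo 0 δ, μ {x ∈ W | u x - c = v x} = 0 := by
  have hcount := Measure.countable_meas_level_set_pos₀ (μ := μ.restrict W)
    ((hu.sub hv).aemeasurable hW).nullMeasurable
  obtain ⟨c, hc, hc0, hcδ⟩ := (hcount.dense_compl ℝ).exists_between hδ
  refine ⟨c, ⟨hc0, hcδ⟩, ?_⟩
  have h0 : μ.restrict W {x | u x - v x = c} = 0 := by simpa using hc
  rw [Measure.restrict_apply' hW] at h0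
  refine measure_mono_null ?_ h0
  rintro x ⟨hx, hxc⟩
  exact ⟨show u x - v x = c by linarith, hx⟩

theorem lintegral_le_of_le_add_of_compl {α : Type*} [MeasurableSpace α] (ν : Measure α)
    {f a b a' b' : α → ℝ≥0∞} {P : Set α} (hP : MeasurableSet P) (ha' : Measurable a')
    (hb' : Measurable b') (ha : a' ≤ a) (hb : b' ≤ b) (h1 : ∀ x ∈ P, f x ≤ a' x + 3 * b x)
    (h2 : ∀ x ∈ Pᶜ, f x ≤ b' x + 3 * a x) :
    ∫⁻ x, f x ∂ν ≤ 4 * (∫⁻ x, a x ∂ν + ∫⁻ x, b x ∂ν) := by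
  have key {Q : Set α} (hQ : MeasurableSet Q) {c d d' : α → ℝ≥0∞} (hd' : Measurable d')
      (hd : d' ≤ d) (h : ∀ x ∈ Q, f x ≤ d' x + 3 * c x) :
      ∫⁻ x in Q, f x ∂ν ≤ ∫⁻ x, d x ∂ν + 3 * ∫⁻ x, c x ∂ν :=
    calc ∫⁻ x in Q, f x ∂ν ≤ ∫⁻ x in Q, d' x + 3 * c x ∂ν := setLIntegral_mono' hQ h
      _ = ∫⁻ x in Q, d' x ∂ν + 3 * ∫⁻ x in Q, c x ∂ν := by
        rw [lintegral_add_left hd', lintegral_const_mul' _ _ (by simp)]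
      _ ≤ _ := add_le_add ((setLIntegral_le_lintegral _ _).trans (lintegral_mono hd))
        (mul_le_mul' le_rfl (setLIntegral_le_lintegral _ _))
  rw [← lintegral_add_compl f hP]
  refine (add_le_add (key hP ha' ha h1) (key hP.compl hb' hb h2)).trans_eq ?_
  ring

theorem ENNReal.ofReal_le_ofReal_add_three_mul {f d c : ℝ} (hd : 0 ≤ d) (hc : 0 ≤ c)
    (h : f ≤ d + 3 * c) :
    ENNReal.ofReal f ≤ ENNReal.ofReal d + 3 * ENNReal.ofReal c := by
  refine (ENNReal.ofReal_le_ofReal h).trans_eq ?_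
  rw [ENNReal.ofReal_add hd (by positivity), ENNReal.ofReal_mul (by norm_num)]
  simp

theorem abs_max_sub_le_of_and {a b e' e : ℝ} (h : 1 / 2 ≤ a ∧ b < 1 / 2)
    (he : e' = 0 ∧ e = 0 ∨ e' = 0 ∧ e = 1 ∨ e' = 1 ∧ e = 1) :
    |max a b - e| ≤ min |b| |b - 1| + 3 * |a - e'| := by
  have h0 : 0 ≤ min |b| |b - 1| := by positivity
  rw [max_eq_left (h.2.le.trans h.1)]
  rcases he with ⟨rfl, rfl⟩ | ⟨rfl, rfl⟩ | ⟨rfl, rfl⟩ <;> grind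

theorem abs_min_sub_le_of_and {a b e' e : ℝ} (h : 1 / 2 ≤ a ∧ b < 1 / 2)
    (he : e' = 0 ∧ e = 0 ∨ e' = 0 ∧ e = 1 ∨ e' = 1 ∧ e = 1) :
    |min a b - e'| ≤ min |a| |a - 1| + 3 * |b - e| := by
  have h0 : 0 ≤ min |a| |a - 1| := by positivity
  rw [min_eq_right (h.2.le.trans h.1)]
  rcases he with ⟨rfl, rfl⟩ | ⟨rfl, rfl⟩ | ⟨rfl, rfl⟩ <;> grind

theorem abs_max_sub_le_of_not_and {a b e : ℝ} (h : ¬(1 / 2 ≤ a ∧ b < 1 / 2))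
    (he : e = 0 ∨ e = 1) :
    |max a b - e| ≤ min |a| |a - 1| + 3 * |b - e| := by
  rcases he with rfl | rfl <;> grind (splits := 30)

theorem abs_min_sub_le_of_not_and {a b e : ℝ} (h : ¬(1 / 2 ≤ a ∧ b < 1 / 2))
    (he : e = 0 ∨ e = 1) :
    |min a b - e| ≤ min |b| |b - 1| + 3 * |a - e| := by
  rcases he with rfl | rfl <;> grind (splits := 30)

section Lattice

variable {α : Type*}

theorem Set.indicator_one_eq_zero_or_one (E : Set α) (x : α) :
    E.indicator (fun _ => (1 : ℝ)) x = 0 ∨ E.indicator (fun _ => (1 : ℝ)) x = 1 := by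
  by_cases h : x ∈ E <;> simp [h]

theorem Set.indicator_one_cases_of_subset {E' E : Set α} (hE : E' ⊆ E) (x : α) :
    E'.indicator (fun _ => (1 : ℝ)) x = 0 ∧ E.indicator (fun _ => (1 : ℝ)) x = 0 ∨
    E'.indicator (fun _ => (1 : ℝ)) x = 0 ∧ E.indicator (fun _ => (1 : ℝ)) x = 1 ∨
    E'.indicator (fun _ => (1 : ℝ)) x = 1 ∧ E.indicator (fun _ => (1 : ℝ)) x = 1 := by
  by_cases h' : x ∈ E'
  · simp [h', hE h']
  · by_cases h : x ∈ E <;> simp [h, h']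

theorem min_abs_abs_sub_one_le (E : Set α) (x : α) (t : ℝ) :
    min |t| |t - 1| ≤ |t - E.indicator (fun _ => (1 : ℝ)) x| := by
  by_cases h : x ∈ E <;> simp [h]

variable [MeasurableSpace α] (ν : Measure α) {u v : α → ℝ} {E' E : Set α}

/-- No measurability of `E'` and `E` is required, so that the integrals are lower integrals. -/
theorem lintegral_abs_max_sub_indicator_le (hu : Measurable u) (hv : Measurable v)
    (hE : E' ⊆ E) :
    ∫⁻ x, ENNReal.ofReal |max (u x) (v x) - E.indicator (fun _ => 1) x| ∂ν ≤
      4 * (∫⁻ x, ENNReal.ofReal |u x - E'.indicator (fun _ => 1) x| ∂ν +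
        ∫⁻ x, ENNReal.ofReal |v x - E.indicator (fun _ => 1) x| ∂ν) := by
  rw [add_comm (∫⁻ x, ENNReal.ofReal |u x - E'.indicator (fun _ => 1) x| ∂ν)]
  exact lintegral_le_of_le_add_of_compl ν
    (a' := fun x => ENNReal.ofReal (min |v x| |v x - 1|))
    (b' := fun x => ENNReal.ofReal (min |u x| |u x - 1|))
    (P := {x | 1 / 2 ≤ u x ∧ v x < 1 / 2})
    ((measurableSet_le measurable_const hu).inter (measurableSet_lt hv measurable_const))
    (by fun_prop) (by fun_prop)
    (fun x => ENNReal.ofReal_le_ofReal (min_abs_abs_sub_one_le E x (v x)))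
    (fun x => ENNReal.ofReal_le_ofReal (min_abs_abs_sub_one_le E' x (u x)))
    (fun x hx => ENNReal.ofReal_le_ofReal_add_three_mul (by positivity) (by positivity)
      (abs_max_sub_le_of_and hx (Set.indicator_one_cases_of_subset hE x)))
    fun x hx => ENNReal.ofReal_le_ofReal_add_three_mul (by positivity) (by positivity)
      (abs_max_sub_le_of_not_and hx (Set.indicator_one_eq_zero_or_one E x))

/-- No measurability of `E'` and `E` is required, so that the integrals are lower integrals. -/
theorem lintegral_abs_min_sub_indicator_le (hu : Measurable u) (hv : Measurable v)
    (hE : E' ⊆ E) :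
    ∫⁻ x, ENNReal.ofReal |min (u x) (v x) - E'.indicator (fun _ => 1) x| ∂ν ≤
      4 * (∫⁻ x, ENNReal.ofReal |u x - E'.indicator (fun _ => 1) x| ∂ν +
        ∫⁻ x, ENNReal.ofReal |v x - E.indicator (fun _ => 1) x| ∂ν) :=
  lintegral_le_of_le_add_of_compl ν
    (a' := fun x => ENNReal.ofReal (min |u x| |u x - 1|))
    (b' := fun x => ENNReal.ofReal (min |v x| |v x - 1|))
    (P := {x | 1 / 2 ≤ u x ∧ v x < 1 / 2})
    ((measurableSet_le measurable_const hu).inter (measurableSet_lt hv measurable_const))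
    (by fun_prop) (by fun_prop)
    (fun x => ENNReal.ofReal_le_ofReal (min_abs_abs_sub_one_le E' x (u x)))
    (fun x => ENNReal.ofReal_le_ofReal (min_abs_abs_sub_one_le E x (v x)))
    (fun x hx => ENNReal.ofReal_le_ofReal_add_three_mul (by positivity) (by positivity)
      (abs_min_sub_le_of_and hx (Set.indicator_one_cases_of_subset hE x)))
    fun x hx => ENNReal.ofReal_le_ofReal_add_three_mul (by positivity) (by positivity)
      (abs_min_sub_le_of_not_and hx (Set.indicator_one_eq_zero_or_one E' x))

end Lattice

theorem TendstoL1loc.max_min {μ : Measure X} {W E' E : Set X} {u v : ℕ → X → ℝ} (hE : E' ⊆ E)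
    (huc : ∀ i, ContinuousOn (u i) W) (hvc : ∀ i, ContinuousOn (v i) W)
    (hu : TendstoL1loc μ W u (E'.indicator fun _ => 1))
    (hv : TendstoL1loc μ W v (E.indicator fun _ => 1)) :
    TendstoL1loc μ W (fun i x => max (u i x) (v i x)) (E.indicator fun _ => 1) ∧
      TendstoL1loc μ W (fun i x => min (u i x) (v i x)) (E'.indicator fun _ => 1) := by
  have meas {V : Set X} (hV : IsOpen V) (hVW : V ⊆ W) {f : X → ℝ} (hf : ContinuousOn f W) :
      Measurable (V.indicator f) := by
    classical
    rw [← Set.piecewise_eq_indicator]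
    exact (hf.mono hVW).measurable_piecewise continuousOn_const hV.measurableSet
  have eq {V : Set X} (f : X → ℝ) {x : X} (hx : x ∈ V) : V.indicator f x = f x := by simp [hx]
  have congr {V : Set X} (hV : IsOpen V) {f g : X → ℝ} (h : ∀ x ∈ V, f x = g x) :
      ∫⁻ x in V, ENNReal.ofReal (f x) ∂μ = ∫⁻ x in V, ENNReal.ofReal (g x) ∂μ :=
    setLIntegral_congr_fun hV.measurableSet fun x hx => congrArg ENNReal.ofReal (h x hx)
  have lim {V : Set X} (hV : IsOpen V) (hVc : IsCompact (closure V)) (hVW : closure V ⊆ W) :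
      Tendsto (fun i => 4 * (∫⁻ x in V, ENNReal.ofReal |u i x - E'.indicator (fun _ => 1) x| ∂μ +
        ∫⁻ x in V, ENNReal.ofReal |v i x - E.indicator (fun _ => 1) x| ∂μ)) atTop (𝓝 0) := by
    simpa using ENNReal.Tendsto.const_mul ((hu V hV hVc hVW).add (hv V hV hVc hVW))
      (Or.inr (by simp : (4 : ℝ≥0∞) ≠ ⊤))
  constructor
  · intro V hV hVc hVW
    refine tendsto_of_tendsto_of_tendsto_of_le_of_le tendsto_const_nhds (lim hV hVc hVW)
      (fun _ => zero_le) fun i => ?_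
    have := lintegral_abs_max_sub_indicator_le (μ.restrict V)
      (meas hV (subset_closure.trans hVW) (huc i)) (meas hV (subset_closure.trans hVW) (hvc i)) hE
    refine le_of_eq_of_le (congr hV fun x hx => ?_) (this.trans_eq ?_)
    · simp only [eq _ hx]
    · refine congrArg (4 * ·) (congrArg₂ (· + ·) (congr hV fun x hx => ?_)
        (congr hV fun x hx => ?_)) <;> simp only [eq _ hx]
  · intro V hV hVc hVW
    refine tendsto_of_tendsto_of_tendsto_of_le_of_le tendsto_const_nhds (lim hV hVc hVW)
      (fun _ => zero_le) fun i => ?_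
    have := lintegral_abs_min_sub_indicator_le (μ.restrict V)
      (meas hV (subset_closure.trans hVW) (huc i)) (meas hV (subset_closure.trans hVW) (hvc i)) hE
    refine le_of_eq_of_le (congr hV fun x hx => ?_) (this.trans_eq ?_)
    · simp only [eq _ hx]
    · refine congrArg (4 * ·) (congrArg₂ (· + ·) (congr hV fun x hx => ?_)
        (congr hV fun x hx => ?_)) <;> simp only [eq _ hx]

theorem TendstoL1loc.sub_const {μ : Measure X} [IsLocallyFiniteMeasure μ] {W : Set X}
    {u : ℕ → X → ℝ} {v : X → ℝ} (hu : TendstoL1loc μ W u v) {c : ℕ → ℝ}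
    (hc : Tendsto c atTop (𝓝 0)) : TendstoL1loc μ W (fun i x => u i x - c i) v := by
  intro V hV hVc hVW
  have hfin : μ V ≠ ⊤ := ((measure_mono subset_closure).trans_lt hVc.measure_lt_top).ne
  have h0 : Tendsto (fun i => ENNReal.ofReal |c i| * μ V) atTop (𝓝 0) := by
    simpa using ENNReal.Tendsto.mul_const (ENNReal.tendsto_ofReal hc.abs) (Or.inr hfin)
  have hlim := (hu V hV hVc hVW).add h0
  rw [add_zero] at hlim
  refine tendsto_of_tendsto_of_tendsto_of_le_of_le tendsto_const_nhds hlim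
    (fun _ => zero_le) fun i => ?_
  calc ∫⁻ x in V, ENNReal.ofReal |u i x - c i - v x| ∂μ
      ≤ ∫⁻ x in V, (ENNReal.ofReal |u i x - v x| + ENNReal.ofReal |c i|) ∂μ := by
        refine lintegral_mono fun x => ?_
        rw [← ENNReal.ofReal_add (abs_nonneg _) (abs_nonneg _)]
        refine ENNReal.ofReal_le_ofReal ?_
        rw [sub_right_comm]
        exact abs_sub _ _
    _ = _ := by rw [lintegral_add_right _ measurable_const, setLIntegral_const]

theorem ENNReal.liminf_le_add_of_add_le {a b d e : ℕ → ℝ≥0∞} {p' p ε : ℝ≥0∞} (hp : p ≠ ⊤)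
    (hp' : p' ≠ ⊤) (hε : ε ≠ ⊤) (hd : Tendsto d atTop (𝓝 p')) (h : ∀ i, a i + b i ≤ d i + e i)
    (hb : p ≤ liminf b atTop) (he : liminf e atTop ≤ p + ε) : liminf a atTop ≤ p' + ε := by
  refine ENNReal.le_of_forall_pos_le_add fun δ hδ _ => ?_
  have hδ3 : (0 : ℝ≥0∞) < δ / 3 := ENNReal.div_pos (by simpa using hδ.ne') (by simp)
  have hb' : ∀ᶠ i in atTop, p ≤ b i + δ / 3 := by
    rcases eq_or_ne p 0 with rfl | hp0
    · simp
    · filter_upwards [eventually_lt_of_lt_liminf ((ENNReal.sub_lt_self hp hp0 hδ3.ne').trans_le hb)]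
        with i hi using tsub_le_iff_right.1 hi.le
  have hd' := hd.eventually_lt_const (ENNReal.lt_add_right hp' hδ3.ne')
  have he' : ∃ᶠ i in atTop, e i < p + ε + δ / 3 := frequently_lt_of_liminf_lt (by isBoundedDefault)
    (he.trans_lt (ENNReal.lt_add_right (ENNReal.add_ne_top.2 ⟨hp, hε⟩) hδ3.ne'))
  refine liminf_le_of_frequently_le ((he'.and_eventually (hb'.and hd')).mono ?_)
  rintro i ⟨hei, hbi, hdi⟩
  refine (ENNReal.add_le_add_iff_right hp).1 ?_
  calc a i + p ≤ a i + (b i + δ / 3) := add_le_add le_rfl hbi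
    _ = a i + b i + δ / 3 := (add_assoc _ _ _).symm
    _ ≤ (p' + δ / 3) + (p + ε + δ / 3) + δ / 3 :=
      add_le_add ((h i).trans (add_le_add hdi.le hei.le)) le_rfl
    _ = p' + ε + (δ / 3 + δ / 3 + δ / 3) + p := by ring
    _ = p' + ε + δ + p := by rw [ENNReal.add_thirds]

/-- **Lemma 3.4 (almost optimal sequences).** Given an almost optimal approximating
sequence for `E`, one can find a dominated almost optimal approximating sequence
for any subset `E' ⊆ E` of finite perimeter in `W`. -/
theorem almost_optimal_sequences
    [ProperSpace X] (μ : Measure X)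
    (hball : ∀ (x : X) (r : ℝ), 0 < r → 0 < μ (ball x r) ∧ μ (ball x r) < ⊤)
    (W : Set X) (hW : IsOpen W) (E' E : Set X) (hsub : E' ⊆ E)
    (hE' : perimeter μ E' W < ⊤) (hE : perimeter μ E W < ⊤)
    (ε : ℝ) (hε : 0 ≤ ε)
    (w : ℕ → X → ℝ) (hlip : ∀ i, LocLipschitzOn (w i) W)
    (hconv : TendstoL1loc μ W w (Set.indicator E fun _ => (1 : ℝ)))
    (hen : Filter.liminf (fun i => gradEnergy μ (w i) W) Filter.atTop ≤
      perimeter μ E W + ENNReal.ofReal ε) :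
    ∃ w' : ℕ → X → ℝ,
      (∀ i, LocLipschitzOn (w' i) W) ∧
      (∀ i, ∀ x ∈ W, w' i x ≤ w i x) ∧
      TendstoL1loc μ W w' (Set.indicator E' fun _ => (1 : ℝ)) ∧
      Filter.liminf (fun i => gradEnergy μ (w' i) W) Filter.atTop ≤
        perimeter μ E' W + ENNReal.ofReal ε := by
  have hloc : IsLocallyFiniteMeasure μ :=
    ⟨fun x => ⟨ball x 1, ball_mem_nhds x one_pos, (hball x 1 one_pos).2⟩⟩
  rw [perimeter_eq_variationOn hW] at hE hE' hen ⊢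
  obtain ⟨u, hulip, huconv, huen⟩ := exists_seq_gradEnergy_le hW hE'
  have hshift (i : ℕ) := exists_shift_measure_eq_zero (μ := μ) hW.measurableSet
    (hulip i).continuousOn (hlip i).continuousOn (Nat.one_div_pos_of_nat (α := ℝ) (n := i))
  choose c hc hnull using hshift
  have hc0 : Tendsto c atTop (𝓝 0) := squeeze_zero (fun i => (hc i).1.le) (fun i => (hc i).2.le)
    tendsto_one_div_add_atTop_nhds_zero_nat
  have hslip (i : ℕ) : LocLipschitzOn (fun x => u i x - c i) W := (hulip i).sub_const (c i)
  obtain ⟨hmax, hmin⟩ := (huconv.sub_const hc0).max_min hsub (fun i => (hslip i).continuousOn)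
    (fun i => (hlip i).continuousOn) hconv
  have hPle : variationOn μ (E.indicator fun _ => 1) W ≤
      liminf (fun i => gradEnergy μ (fun x => max (u i x - c i) (w i x)) W) atTop :=
    iInf₂_le (fun i x => max (u i x - c i) (w i x)) ⟨fun i => (hslip i).max (hlip i), hmax⟩
  have hsum (i : ℕ) := (gradEnergy_min_add_gradEnergy_max_le hW (hslip i) (hlip i) (hnull i)).trans
    (add_le_add ((gradEnergy_sub_const_le μ (u i) W (c i)).trans (huen i)) le_rfl)
  refine ⟨fun i x => min (u i x - c i) (w i x), fun i => (hslip i).min (hlip i),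
    fun i x _ => min_le_right _ _, hmin, ?_⟩
  have hlim := tendsto_const_nhds (x := variationOn μ (E'.indicator fun _ => 1) W) |>.add
    ((tendsto_add_atTop_iff_nat 1).2 ENNReal.tendsto_inv_nat_nhds_zero)
  simp only [Nat.cast_add, Nat.cast_one, add_zero] at hlim
  exact ENNReal.liminf_le_add_of_add_le hE.ne hE'.ne ENNReal.ofReal_ne_top hlim hsum hPle hen
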